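/- Let N ≥ -1 be an integer and let 0 < a ≤ 1. The Hurwitz zeta function σ ↦ ζ(σ, a) has a real zero in the open interval (-N-1, -N) if and only if B_{N+1}(a) · B_{N+2}(a) < 0, where B_n denotes the n-th Bernoulli polynomial. -/

import Mathlib

open HurwitzZeta Polynomial Set

/-- The `n`-th Bernoulli polynomial evaluated at a real number. -/
noncomputable def bernoulliPoly (n : ℕ) (x : ℝ) : ℝ := Polynomial.aeval x (Polynomial.bernoulli n)

/-!
Let `R n x t` be the remainder of `t * exp (x * t) / (exp t - 1) = ∑ i, B_i(x) * t ^ i / i !` after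
`n` terms. Continuing the classical formula for `Γ(σ) * ζ(σ, a)` to the left of its poles gives
`Γ(σ) * ζ(σ, a) = ∫ t in (0, ∞), R (M + 1) (1 - a) t * t ^ (σ - 2)` for `-M < σ < 1 - M`.

If `B_M(a) * B_{M+1}(a) ≥ 0`, then `t ↦ R (M + 1) (1 - a) t` has constant strict sign on `(0, ∞)`,
so there is no zero. This rests on
`∂ₓ R (n + 1) = t * R n = t * R (n + 1) + t ^ (n + 1) * B_n / n !` and on `R n 0 = R n 1` for
`n ≥ 2`: the sign of `B_n` controls the monotonicity of `exp (-x * t) * R (n + 1) x t` in `x`, and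
the signs of `B_n` on `[0, 1]` are known.

If `B_M(a) * B_{M+1}(a) < 0`, then `ζ(-M, a) = -B_{M+1}(a) / (M + 1)` and
`ζ(1 - M, a) = -B_M(a) / M` have opposite signs, where for `M = 0` the second value is replaced by
the limit `-∞` at the left of the pole `1`; the intermediate value theorem gives a zero.
-/

section Remainder

open scoped Nat

/-- The remainder after the first `n` terms of the expansion
`t * exp (x * t) / (exp t - 1) = ∑ i, bernoulliFun i x * t ^ i / i !`, i.e. of the generating
function of the Bernoulli polynomials. At `t = 0` the quotient takes the junk value `0`. -/
noncomputable def bernoulliRemainder (n : ℕ) (x t : ℝ) : ℝ :=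
  t * Real.exp (x * t) / (Real.exp t - 1) -
    ∑ i ∈ Finset.range n, bernoulliFun i x * t ^ i / i !

theorem bernoulliRemainder_zero (x t : ℝ) :
    bernoulliRemainder 0 x t = t * Real.exp (x * t) / (Real.exp t - 1) := by
  simp [bernoulliRemainder]

theorem bernoulliRemainder_succ (n : ℕ) (x t : ℝ) :
    bernoulliRemainder (n + 1) x t =
      bernoulliRemainder n x t - bernoulliFun n x * t ^ n / n ! := by
  simp [bernoulliRemainder, Finset.sum_range_succ, sub_sub]

theorem bernoulliRemainder_zero_pos (x : ℝ) {t : ℝ} (ht : 0 < t) :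
    0 < bernoulliRemainder 0 x t := by
  rw [bernoulliRemainder_zero]
  have := sub_pos.2 (Real.one_lt_exp_iff.2 ht)
  positivity

theorem bernoulliRemainder_one_eq_zero (n : ℕ) {t : ℝ} (ht : 0 < t) :
    bernoulliRemainder (n + 2) 1 t = bernoulliRemainder (n + 2) 0 t := by
  induction n with
  | zero =>
    have := (sub_pos.2 (Real.one_lt_exp_iff.2 ht)).ne'
    simp only [bernoulliRemainder_succ, bernoulliRemainder_zero, bernoulliFun_zero,
      bernoulliFun_one, zero_add, one_mul, zero_mul, Real.exp_zero]
    field_simp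
    ring
  | succ n ih =>
    rw [bernoulliRemainder_succ (n + 2), bernoulliRemainder_succ (n + 2), ih,
      bernoulliFun_endpoints_eq_of_ne_one (by lia)]

theorem hasDerivAt_bernoulliRemainder_succ (n : ℕ) (x t : ℝ) :
    HasDerivAt (fun y ↦ bernoulliRemainder (n + 1) y t) (t * bernoulliRemainder n x t) x := by
  have hexp : HasDerivAt (fun y ↦ t * Real.exp (y * t) / (Real.exp t - 1))
      (t * (Real.exp (x * t) * t) / (Real.exp t - 1)) x :=
    (((hasDerivAt_mul_const t).exp).const_mul t).div_const _
  have hsum : HasDerivAt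
      (fun y ↦ ∑ i ∈ Finset.range (n + 1), bernoulliFun i y * t ^ i / i !)
      (∑ i ∈ Finset.range (n + 1), i * bernoulliFun (i - 1) x * t ^ i / i !) x :=
    HasDerivAt.fun_sum fun i _ ↦ ((hasDerivAt_bernoulliFun i x).mul_const _).div_const _
  refine (hexp.fun_sub hsum).congr_deriv ?_
  rw [bernoulliRemainder, mul_sub, Finset.sum_range_succ', Finset.mul_sum]
  congr 1
  · ring
  · simp only [Nat.add_sub_cancel, Nat.factorial_succ, CharP.cast_eq_zero, zero_mul, zero_div,
      add_zero]
    refine Finset.sum_congr rfl fun i _ ↦ ?_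
    push_cast
    field_simp
    ring

theorem exists_bernoulliRemainder_succ_eq_zero (n : ℕ) {t : ℝ} (ht : 0 < t) :
    ∃ x ∈ Ioo (0 : ℝ) 1, bernoulliRemainder (n + 1) x t = 0 := by
  obtain ⟨x, hx, hx0⟩ := exists_hasDerivAt_eq_zero zero_lt_one
    (HasDerivAt.continuousOn fun x _ ↦ hasDerivAt_bernoulliRemainder_succ (n + 1) x t)
    (bernoulliRemainder_one_eq_zero n ht).symm
    fun x _ ↦ hasDerivAt_bernoulliRemainder_succ (n + 1) x t
  exact ⟨x, hx, (mul_eq_zero.1 hx0).resolve_left ht.ne'⟩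

theorem abs_bernoulliRemainder_le (n : ℕ) {x t : ℝ} (hx : x ∈ Icc (0 : ℝ) 1) (ht : 0 < t) :
    |bernoulliRemainder n x t| ≤ (1 + t) * t ^ n := by
  induction n generalizing x with
  | zero =>
    have hexp := sub_pos.2 (Real.one_lt_exp_iff.2 ht)
    rw [abs_of_pos (bernoulliRemainder_zero_pos x ht), bernoulliRemainder_zero, pow_zero, mul_one,
      div_le_iff₀ hexp]
    calc t * Real.exp (x * t) ≤ t * Real.exp t := by
          gcongr
          nlinarith [hx.2]
      _ ≤ (1 + t) * (Real.exp t - 1) := by linarith [Real.add_one_le_exp t]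
  | succ n ih =>
    obtain ⟨c, hc, hc0⟩ := exists_bernoulliRemainder_succ_eq_zero n ht
    have hderiv : ∀ y ∈ Icc (0 : ℝ) 1, ‖t * bernoulliRemainder n y t‖ ≤ (1 + t) * t ^ (n + 1) := by
      intro y hy
      rw [norm_mul, Real.norm_of_nonneg ht.le, Real.norm_eq_abs, pow_succ', mul_left_comm]
      gcongr
      exact ih hy
    have hmvt := (convex_Icc (0 : ℝ) 1).norm_image_sub_le_of_norm_hasDerivWithin_le
      (fun y _ ↦ (hasDerivAt_bernoulliRemainder_succ n y t).hasDerivWithinAt) hderiv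
      (Ioo_subset_Icc_self hc) hx
    rw [hc0, sub_zero, Real.norm_eq_abs] at hmvt
    refine hmvt.trans (mul_le_of_le_one_right (by positivity) ?_)
    exact abs_sub_le_iff.2 ⟨by linarith [hx.2, hc.1], by linarith [hx.1, hc.2]⟩

theorem exists_bernoulliRemainder_ne_zero (n : ℕ) {t : ℝ} (ht : 0 < t) :
    ∃ x ∈ Ioo (0 : ℝ) 1, bernoulliRemainder n x t ≠ 0 := by
  induction n with
  | zero => exact ⟨1 / 2, by norm_num, (bernoulliRemainder_zero_pos _ ht).ne'⟩
  | succ n ih =>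
    by_contra! h
    obtain ⟨x, hx, hx0⟩ := ih
    have hzero : (fun y ↦ bernoulliRemainder (n + 1) y t) =ᶠ[nhds x] fun _ ↦ 0 :=
      Filter.eventually_of_mem (Ioo_mem_nhds hx.1 hx.2) h
    have := (hasDerivAt_bernoulliRemainder_succ n x t).unique
      ((hasDerivAt_const x (0 : ℝ)).congr_of_eventuallyEq hzero)
    exact hx0 ((mul_eq_zero.1 this).resolve_left ht.ne')

theorem exists_mul_bernoulliRemainder_succ_neg (n : ℕ) {c t : ℝ} (hc : c ≠ 0) (ht : 0 < t) :
    ∃ x ∈ Icc (0 : ℝ) 1, c * bernoulliRemainder (n + 1) x t < 0 := by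
  by_contra! h
  have hderiv (x : ℝ) : HasDerivAt (fun y ↦ c * bernoulliRemainder (n + 2) y t)
      (c * (t * bernoulliRemainder (n + 1) x t)) x :=
    (hasDerivAt_bernoulliRemainder_succ (n + 1) x t).const_mul c
  have hmono : MonotoneOn (fun y ↦ c * bernoulliRemainder (n + 2) y t) (Icc 0 1) := by
    refine monotoneOn_of_hasDerivWithinAt_nonneg (convex_Icc 0 1)
      (HasDerivAt.continuousOn fun x _ ↦ hderiv x) (fun x _ ↦ (hderiv x).hasDerivWithinAt) ?_
    intro x hx
    rw [mul_left_comm]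
    exact mul_nonneg ht.le (h x (interior_subset hx))
  obtain ⟨x, hx, hx0⟩ := exists_bernoulliRemainder_ne_zero (n + 1) ht
  have hconst : (fun y ↦ c * bernoulliRemainder (n + 2) y t) =ᶠ[nhds x]
      fun _ ↦ c * bernoulliRemainder (n + 2) 0 t := by
    filter_upwards [Ioo_mem_nhds hx.1 hx.2] with y hy
    refine le_antisymm ?_ (hmono (left_mem_Icc.2 zero_le_one) (Ioo_subset_Icc_self hy) hy.1.le)
    rw [← bernoulliRemainder_one_eq_zero n ht]
    exact hmono (Ioo_subset_Icc_self hy) (right_mem_Icc.2 zero_le_one) hy.2.le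
  have := (hderiv x).unique ((hasDerivAt_const x _).congr_of_eventuallyEq hconst)
  exact hx0 (by simpa [hc, ht.ne'] using this)

/- With `R n = bernoulliRemainder n · t`, the derivative `t * R n` of `R (n + 1)` differs from
`t * R (n + 1)` by a multiple of `bernoulliFun n`: up to the integrating factor `exp (-x * t)`, the
remainder `R (n + 1)` is monotone wherever `bernoulliFun n` has a constant sign. -/
theorem exp_mul_bernoulliRemainder_succ_le {n : ℕ} {c t u v : ℝ} (ht : 0 ≤ t) (huv : u ≤ v)
    (h : ∀ x ∈ Icc u v, 0 ≤ c * bernoulliFun n x) :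
    Real.exp (-(u * t)) * (c * bernoulliRemainder (n + 1) u t) ≤
      Real.exp (-(v * t)) * (c * bernoulliRemainder (n + 1) v t) := by
  have hderiv (x : ℝ) : HasDerivAt
      (fun y ↦ Real.exp (-(y * t)) * (c * bernoulliRemainder (n + 1) y t))
      (Real.exp (-(x * t)) * (t ^ (n + 1) / n ! * (c * bernoulliFun n x))) x := by
    refine (((hasDerivAt_mul_const t).neg.exp).mul
      ((hasDerivAt_bernoulliRemainder_succ n x t).const_mul c)).congr_deriv ?_
    simp only [bernoulliRemainder_succ, Pi.neg_apply]
    ring_nf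
  have hmono := monotoneOn_of_hasDerivWithinAt_nonneg (convex_Icc u v)
    (HasDerivAt.continuousOn fun x _ ↦ hderiv x) (fun x _ ↦ (hderiv x).hasDerivWithinAt)
    fun x hx ↦ mul_nonneg (Real.exp_nonneg _)
      (mul_nonneg (by positivity) (h x (interior_subset hx)))
  exact hmono (left_mem_Icc.2 huv) (right_mem_Icc.2 huv) huv

theorem mul_bernoulliRemainder_succ_nonneg_right {n : ℕ} {c t u v : ℝ} (ht : 0 ≤ t) (huv : u ≤ v)
    (h : ∀ x ∈ Icc u v, 0 ≤ c * bernoulliFun n x) (hu : 0 ≤ c * bernoulliRemainder (n + 1) u t) :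
    0 ≤ c * bernoulliRemainder (n + 1) v t :=
  nonneg_of_mul_nonneg_right ((mul_nonneg (Real.exp_nonneg _) hu).trans
    (exp_mul_bernoulliRemainder_succ_le ht huv h)) (Real.exp_pos _)

theorem mul_bernoulliRemainder_succ_nonpos_left {n : ℕ} {c t u v : ℝ} (ht : 0 ≤ t) (huv : u ≤ v)
    (h : ∀ x ∈ Icc u v, 0 ≤ c * bernoulliFun n x) (hv : c * bernoulliRemainder (n + 1) v t ≤ 0) :
    c * bernoulliRemainder (n + 1) u t ≤ 0 :=
  nonpos_of_mul_nonpos_right ((exp_mul_bernoulliRemainder_succ_le ht huv h).trans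
    (mul_nonpos_of_nonneg_of_nonpos (Real.exp_nonneg _) hv)) (Real.exp_pos _)

theorem mul_bernoulliRemainder_succ_neg_left {n : ℕ} {c t u v : ℝ} (ht : 0 ≤ t) (huv : u ≤ v)
    (h : ∀ x ∈ Icc u v, 0 ≤ c * bernoulliFun n x) (hv : c * bernoulliRemainder (n + 1) v t < 0) :
    c * bernoulliRemainder (n + 1) u t < 0 := by
  contrapose! hv
  exact mul_bernoulliRemainder_succ_nonneg_right ht huv h hv

theorem mul_bernoulliRemainder_succ_pos_left {n : ℕ} {c t u v : ℝ} (ht : 0 ≤ t) (huv : u ≤ v)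
    (h : ∀ x ∈ Icc u v, c * bernoulliFun n x ≤ 0) (hv : 0 < c * bernoulliRemainder (n + 1) v t) :
    0 < c * bernoulliRemainder (n + 1) u t := by
  rw [← neg_lt_zero, ← neg_mul] at hv ⊢
  exact mul_bernoulliRemainder_succ_neg_left ht huv
    (fun x hx ↦ by simpa only [neg_mul, neg_nonneg] using h x hx) hv

section SignPattern

variable {n : ℕ} {c p q t : ℝ}

/- Otherwise `c * bernoulliRemainder (n + 2) · t`, having equal values at `0` and `1`, would be
nonnegative on all of `[0, 1]`. -/
theorem mul_bernoulliRemainder_neg_of_sign_change (hc : c ≠ 0) (ht : 0 < t) (hp : 0 ≤ p)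
    (h₁ : ∀ x ∈ Icc 0 p, c * bernoulliFun (n + 1) x ≤ 0)
    (h₂ : ∀ x ∈ Icc p q, 0 ≤ c * bernoulliFun (n + 1) x)
    (h₃ : ∀ x ∈ Icc q 1, c * bernoulliFun (n + 1) x ≤ 0) :
    c * bernoulliRemainder (n + 2) p t < 0 := by
  by_contra! hRp
  have left {u v : ℝ} (huv : u ≤ v) (h : ∀ x ∈ Icc u v, c * bernoulliFun (n + 1) x ≤ 0)
      (hv : 0 ≤ c * bernoulliRemainder (n + 2) v t) : 0 ≤ c * bernoulliRemainder (n + 2) u t := by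
    rw [← neg_nonpos, ← neg_mul] at hv ⊢
    exact mul_bernoulliRemainder_succ_nonpos_left ht.le huv
      (fun x hx ↦ by simpa only [neg_mul, neg_nonneg] using h x hx) hv
  have hR0 : 0 ≤ c * bernoulliRemainder (n + 2) 0 t := left hp h₁ hRp
  obtain ⟨x, ⟨hx0, hx1⟩, hx⟩ := exists_mul_bernoulliRemainder_succ_neg (n + 1) hc ht
  refine hx.not_ge ?_
  rcases le_total x p with hxp | hpx
  · exact left hxp (fun y hy ↦ h₁ y ⟨hx0.trans hy.1, hy.2⟩) hRp
  rcases le_total x q with hxq | hqx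
  · exact mul_bernoulliRemainder_succ_nonneg_right ht.le hpx
      (fun y hy ↦ h₂ y ⟨hy.1, hy.2.trans hxq⟩) hRp
  · exact left hx1 (fun y hy ↦ h₃ y ⟨hqx.trans hy.1, hy.2⟩)
      (by rwa [bernoulliRemainder_one_eq_zero n ht])

theorem mul_bernoulliRemainder_pos_of_sign_change (hc : c ≠ 0) (ht : 0 < t) (hq : q ≤ 1)
    (h₁ : ∀ x ∈ Icc 0 p, c * bernoulliFun (n + 1) x ≤ 0)
    (h₂ : ∀ x ∈ Icc p q, 0 ≤ c * bernoulliFun (n + 1) x)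
    (h₃ : ∀ x ∈ Icc q 1, c * bernoulliFun (n + 1) x ≤ 0) :
    0 < c * bernoulliRemainder (n + 2) q t := by
  by_contra! hRq
  have right {u v : ℝ} (huv : u ≤ v) (h : ∀ x ∈ Icc u v, c * bernoulliFun (n + 1) x ≤ 0)
      (hu : c * bernoulliRemainder (n + 2) u t ≤ 0) : c * bernoulliRemainder (n + 2) v t ≤ 0 := by
    rw [← neg_nonneg, ← neg_mul] at hu ⊢
    exact mul_bernoulliRemainder_succ_nonneg_right ht.le huv
      (fun x hx ↦ by simpa only [neg_mul, neg_nonneg] using h x hx) hu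
  have hR1 : c * bernoulliRemainder (n + 2) 1 t ≤ 0 := right hq h₃ hRq
  obtain ⟨x, ⟨hx0, hx1⟩, hx⟩ := exists_mul_bernoulliRemainder_succ_neg (n + 1) (neg_ne_zero.2 hc) ht
  rw [neg_mul, neg_lt_zero] at hx
  refine hx.not_ge ?_
  rcases le_total x p with hxp | hpx
  · exact right hx0 (fun y hy ↦ h₁ y ⟨hy.1, hy.2.trans hxp⟩)
      (by rwa [← bernoulliRemainder_one_eq_zero n ht])
  rcases le_total x q with hxq | hqx
  · exact mul_bernoulliRemainder_succ_nonpos_left ht.le hxq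
      (fun y hy ↦ h₂ y ⟨hpx.trans hy.1, hy.2⟩) hRq
  · exact right hqx (fun y hy ↦ h₃ y ⟨hy.1, hy.2.trans hx1⟩) hRq

end SignPattern

end Remainder

section BernoulliSigns

theorem strictMonoOn_mul_bernoulliFun_succ {n : ℕ} {c u v : ℝ}
    (h : ∀ x ∈ Ioo u v, 0 < c * bernoulliFun n x) :
    StrictMonoOn (fun x ↦ c * bernoulliFun (n + 1) x) (Icc u v) := by
  refine strictMonoOn_of_hasDerivWithinAt_pos (convex_Icc u v) (by fun_prop)
    (fun x _ ↦ ((hasDerivAt_bernoulliFun (n + 1) x).const_mul c).hasDerivWithinAt) ?_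
  intro x hx
  rw [mul_left_comm]
  exact mul_pos (by positivity) (h x (interior_Icc (a := u) ▸ hx))

theorem bernoulliFun_odd_zero (k : ℕ) : bernoulliFun (2 * k + 3) 0 = 0 := by
  rw [bernoulliFun_eval_zero, bernoulli_eq_zero_of_odd ⟨k + 1, by ring⟩ (by lia), Rat.cast_zero]

theorem neg_one_pow_mul_bernoulliFun_odd_add_two (k : ℕ) (x : ℝ) :
    (-1) ^ (k + 1) * bernoulliFun (2 * k + 3) x =
      -((-1) ^ (k + 1 + 1) * bernoulliFun (2 * (k + 1) + 1) x) := by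
  rw [pow_succ' _ (k + 1), neg_one_mul, neg_mul, neg_neg]
  rfl

/- Induction step: `(-1) ^ (k + 1) * bernoulliFun (2 * k + 3)` vanishes at `0` and `1 / 2` and, by
the induction hypothesis, is strictly convex on `[0, 1 / 2]`. -/
theorem neg_one_pow_mul_bernoulliFun_odd_pos (k : ℕ) {x : ℝ} (hx : x ∈ Ioo (0 : ℝ) 2⁻¹) :
    0 < (-1) ^ (k + 1) * bernoulliFun (2 * k + 1) x := by
  induction k generalizing x with
  | zero =>
    norm_num [bernoulliFun_one]
    linarith [hx.2]
  | succ k ih =>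
    set f : ℝ → ℝ := fun y ↦ (-1) ^ (k + 1) * bernoulliFun (2 * k + 3) y with hf
    have hf_zero : f 0 = 0 := by simp only [hf, bernoulliFun_odd_zero, mul_zero]
    have hf_half : f 2⁻¹ = 0 :=
      mul_eq_zero_of_right _ (bernoulliFun_eval_half_eq_zero (k + 1))
    have hderiv : deriv f =
        fun y ↦ (2 * k + 3 : ℕ) * ((-1) ^ (k + 1) * bernoulliFun (2 * k + 2) y) := by
      funext y
      rw [mul_left_comm]
      exact ((hasDerivAt_bernoulliFun (2 * k + 3) y).const_mul _).deriv
    have hconvex : StrictConvexOn ℝ (Icc 0 2⁻¹) f := by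
      refine StrictMonoOn.strictConvexOn_of_deriv (convex_Icc _ _) (by fun_prop) ?_
      rw [hderiv]
      exact fun y hy z hz hyz ↦ mul_lt_mul_of_pos_left (strictMonoOn_mul_bernoulliFun_succ
        (fun y hy ↦ ih hy) (interior_subset hy) (interior_subset hz) hyz) (by positivity)
    have hneg : f x < max (f 0) (f 2⁻¹) :=
      hconvex.lt_on_openSegment (left_mem_Icc.2 (by norm_num)) (right_mem_Icc.2 (by norm_num))
        (by norm_num) (by rwa [openSegment_eq_Ioo (by norm_num)])
    rw [hf_zero, hf_half, max_self] at hneg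
    rwa [show f x = _ from neg_one_pow_mul_bernoulliFun_odd_add_two k x, neg_lt_zero] at hneg

theorem neg_one_pow_mul_bernoulliFun_odd_one_sub (k : ℕ) (x : ℝ) :
    (-1) ^ (k + 1) * bernoulliFun (2 * k + 1) (1 - x) =
      -((-1) ^ (k + 1) * bernoulliFun (2 * k + 1) x) := by
  rw [bernoulliFun_eval_one_sub, Odd.neg_one_pow ⟨k, rfl⟩, neg_one_mul, mul_neg]

theorem neg_one_pow_mul_bernoulliFun_odd_neg (k : ℕ) {x : ℝ} (hx : x ∈ Ioo (2⁻¹ : ℝ) 1) :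
    (-1) ^ (k + 1) * bernoulliFun (2 * k + 1) x < 0 := by
  rw [← neg_pos, ← neg_one_pow_mul_bernoulliFun_odd_one_sub]
  exact neg_one_pow_mul_bernoulliFun_odd_pos k ⟨by linarith [hx.2], by linarith [hx.1]⟩

theorem neg_one_pow_mul_bernoulliFun_odd_nonneg (k : ℕ) {x : ℝ} (hx : x ∈ Icc (0 : ℝ) 2⁻¹) :
    0 ≤ (-1) ^ (k + 1) * bernoulliFun (2 * k + 1) x := by
  have hclosed : IsClosed {y | 0 ≤ (-1) ^ (k + 1) * bernoulliFun (2 * k + 1) y} :=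
    isClosed_le continuous_const (by fun_prop)
  refine closure_minimal (fun y hy ↦ (neg_one_pow_mul_bernoulliFun_odd_pos k hy).le) hclosed ?_
  rwa [closure_Ioo (by norm_num)]

theorem neg_one_pow_mul_bernoulliFun_odd_nonpos (k : ℕ) {x : ℝ} (hx : x ∈ Icc (2⁻¹ : ℝ) 1) :
    (-1) ^ (k + 1) * bernoulliFun (2 * k + 1) x ≤ 0 := by
  rw [← neg_nonneg, ← neg_one_pow_mul_bernoulliFun_odd_one_sub]
  exact neg_one_pow_mul_bernoulliFun_odd_nonneg k ⟨by linarith [hx.2], by linarith [hx.1]⟩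

theorem exists_bernoulliFun_even_eq_zero (k : ℕ) :
    ∃ b ∈ Ioo (0 : ℝ) 2⁻¹, bernoulliFun (2 * k + 2) b = 0 := by
  obtain ⟨b, hb, hb0⟩ := exists_hasDerivAt_eq_zero (show (0 : ℝ) < 2⁻¹ by norm_num)
    (continuous_bernoulliFun (2 * k + 3)).continuousOn
    ((bernoulliFun_odd_zero k).trans (bernoulliFun_eval_half_eq_zero (k + 1)).symm)
    fun x _ ↦ hasDerivAt_bernoulliFun (2 * k + 3) x
  exact ⟨b, hb, (mul_eq_zero.1 hb0).resolve_left (by positivity)⟩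

theorem bernoulliFun_even_min_one_sub (k : ℕ) (x : ℝ) :
    bernoulliFun (2 * k + 2) (min x (1 - x)) = bernoulliFun (2 * k + 2) x := by
  rcases min_choice x (1 - x) with h | h
  · rw [h]
  · rw [h, bernoulliFun_eval_one_sub, Even.neg_one_pow ⟨k + 1, by ring⟩, one_mul]

theorem strictMonoOn_neg_one_pow_mul_bernoulliFun_even (k : ℕ) :
    StrictMonoOn (fun x ↦ (-1) ^ (k + 1) * bernoulliFun (2 * k + 2) x) (Icc 0 2⁻¹) :=
  strictMonoOn_mul_bernoulliFun_succ fun _ hx ↦ neg_one_pow_mul_bernoulliFun_odd_pos k hx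

section EvenRoot

variable {k : ℕ} {b x : ℝ}

theorem neg_one_pow_mul_bernoulliFun_even_nonneg_iff (hb : b ∈ Ioo 0 2⁻¹)
    (hb0 : bernoulliFun (2 * k + 2) b = 0) (hx : x ∈ Icc 0 1) :
    0 ≤ (-1) ^ (k + 1) * bernoulliFun (2 * k + 2) x ↔ b ≤ x ∧ x ≤ 1 - b := by
  have hmin : min x (1 - x) ∈ Icc (0 : ℝ) 2⁻¹ :=
    ⟨le_min hx.1 (sub_nonneg.2 hx.2), by rw [min_le_iff]; grind⟩
  have := (strictMonoOn_neg_one_pow_mul_bernoulliFun_even k).le_iff_le (Ioo_subset_Icc_self hb) hmin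
  rw [← bernoulliFun_even_min_one_sub]
  simpa only [hb0, mul_zero, le_min_iff, le_sub_comm (a := b)] using this

theorem neg_one_pow_mul_bernoulliFun_even_nonpos_iff (hb : b ∈ Ioo 0 2⁻¹)
    (hb0 : bernoulliFun (2 * k + 2) b = 0) (hx : x ∈ Icc 0 1) :
    (-1) ^ (k + 1) * bernoulliFun (2 * k + 2) x ≤ 0 ↔ x ≤ b ∨ 1 - b ≤ x := by
  have hmin : min x (1 - x) ∈ Icc (0 : ℝ) 2⁻¹ :=
    ⟨le_min hx.1 (sub_nonneg.2 hx.2), by rw [min_le_iff]; grind⟩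
  have := (strictMonoOn_neg_one_pow_mul_bernoulliFun_even k).le_iff_le hmin (Ioo_subset_Icc_self hb)
  rw [← bernoulliFun_even_min_one_sub]
  simpa only [hb0, mul_zero, min_le_iff, sub_le_comm (b := x)] using this

end EvenRoot

end BernoulliSigns

section RemainderSign

variable {x : ℝ}

theorem bernoulliRemainder_one_neg (hx : x ≤ 2⁻¹) {t : ℝ} (ht : 0 < t) :
    bernoulliRemainder 1 x t < 0 := by
  have hexp := sub_pos.2 (Real.one_lt_exp_iff.2 ht)
  have hle : Real.exp (x * t) ≤ Real.exp (t / 2) := Real.exp_le_exp.2 (by nlinarith)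
  have hsinh : t / 2 < Real.sinh (t / 2) := Real.self_lt_sinh_iff.2 (by positivity)
  have hsq : Real.exp t - 1 = Real.exp (t / 2) * (2 * Real.sinh (t / 2)) := by
    rw [Real.sinh_eq, mul_div_cancel₀ _ two_ne_zero, mul_sub, ← Real.exp_add, ← Real.exp_add]
    simp
  rw [bernoulliRemainder_succ, bernoulliRemainder_zero, bernoulliFun_zero, sub_neg]
  simp only [pow_zero, mul_one, Nat.factorial_zero, Nat.cast_one, div_one]
  rw [div_lt_one hexp, hsq]
  calc t * Real.exp (x * t) ≤ t * Real.exp (t / 2) := by gcongr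
    _ < _ := by nlinarith [Real.exp_pos (t / 2)]

theorem bernoulliRemainder_succ_of_bernoulliFun_eq_zero {n : ℕ} (h : bernoulliFun n x = 0) (t : ℝ) :
    bernoulliRemainder (n + 1) x t = bernoulliRemainder n x t := by
  rw [bernoulliRemainder_succ, h, zero_mul, zero_div, sub_zero]

section Parity

variable (k : ℕ) {t : ℝ}

theorem neg_one_pow_mul_bernoulliRemainder_even_root {b : ℝ} (hb : b ∈ Ioo 0 2⁻¹)
    (hb0 : bernoulliFun (2 * k + 2) b = 0) (ht : 0 < t) :
    (-1) ^ (k + 1) * bernoulliRemainder (2 * k + 2) b t < 0 ∧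
      0 < (-1) ^ (k + 1) * bernoulliRemainder (2 * k + 2) (1 - b) t := by
  have hb1 : bernoulliFun (2 * k + 2) (1 - b) = 0 := by
    rw [bernoulliFun_eval_one_sub, hb0, mul_zero]
  have nonneg_iff {y : ℝ} (hy : y ∈ Icc 0 1) :=
    neg_one_pow_mul_bernoulliFun_even_nonneg_iff hb hb0 hy
  have nonpos_iff {y : ℝ} (hy : y ∈ Icc 0 1) :=
    neg_one_pow_mul_bernoulliFun_even_nonpos_iff hb hb0 hy
  have hc : (-1 : ℝ) ^ (k + 1) ≠ 0 := by positivity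
  have h₁ : ∀ y ∈ Icc 0 b, (-1) ^ (k + 1) * bernoulliFun (2 * k + 2) y ≤ 0 :=
    fun y hy ↦ (nonpos_iff ⟨hy.1, by grind⟩).2 (.inl hy.2)
  have h₂ : ∀ y ∈ Icc b (1 - b), 0 ≤ (-1) ^ (k + 1) * bernoulliFun (2 * k + 2) y :=
    fun y hy ↦ (nonneg_iff ⟨by grind, by grind⟩).2 hy
  have h₃ : ∀ y ∈ Icc (1 - b) 1, (-1) ^ (k + 1) * bernoulliFun (2 * k + 2) y ≤ 0 :=
    fun y hy ↦ (nonpos_iff ⟨by grind, hy.2⟩).2 (.inr hy.1)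
  rw [← bernoulliRemainder_succ_of_bernoulliFun_eq_zero hb0,
    ← bernoulliRemainder_succ_of_bernoulliFun_eq_zero hb1]
  exact ⟨mul_bernoulliRemainder_neg_of_sign_change hc ht hb.1.le h₁ h₂ h₃,
    mul_bernoulliRemainder_pos_of_sign_change hc ht (sub_le_self 1 hb.1.le) h₁ h₂ h₃⟩

theorem neg_one_pow_mul_bernoulliRemainder_odd_root (ht : 0 < t) :
    (-1) ^ (k + 1) * bernoulliRemainder (2 * k + 3) 2⁻¹ t < 0 ∧
      0 < (-1) ^ (k + 1) * bernoulliRemainder (2 * k + 3) 1 t := by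
  have hB_half : bernoulliFun (2 * k + 3) 2⁻¹ = 0 := bernoulliFun_eval_half_eq_zero (k + 1)
  have hB_one : bernoulliFun (2 * k + 3) 1 = 0 := by
    rw [bernoulliFun_endpoints_eq_of_ne_one (by lia), bernoulliFun_odd_zero]
  have hc : (-1 : ℝ) ^ (k + 1) ≠ 0 := by positivity
  have h₁ : ∀ y ∈ Icc 0 2⁻¹, (-1) ^ (k + 1) * bernoulliFun (2 * k + 3) y ≤ 0 := fun y hy ↦ by
    rw [neg_one_pow_mul_bernoulliFun_odd_add_two, neg_nonpos]
    exact neg_one_pow_mul_bernoulliFun_odd_nonneg (k + 1) hy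
  have h₂ : ∀ y ∈ Icc 2⁻¹ 1, 0 ≤ (-1) ^ (k + 1) * bernoulliFun (2 * k + 3) y := fun y hy ↦ by
    rw [neg_one_pow_mul_bernoulliFun_odd_add_two, neg_nonneg]
    exact neg_one_pow_mul_bernoulliFun_odd_nonpos (k + 1) hy
  have h₃ : ∀ y ∈ Icc 1 1, (-1) ^ (k + 1) * bernoulliFun (2 * k + 3) y ≤ 0 := fun y hy ↦ by
    rw [le_antisymm hy.2 hy.1, hB_one, mul_zero]
  rw [← bernoulliRemainder_succ_of_bernoulliFun_eq_zero hB_half,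
    ← bernoulliRemainder_succ_of_bernoulliFun_eq_zero hB_one]
  exact ⟨mul_bernoulliRemainder_neg_of_sign_change hc ht (by norm_num) h₁ h₂ h₃,
    mul_bernoulliRemainder_pos_of_sign_change hc ht le_rfl h₁ h₂ h₃⟩

theorem neg_one_pow_mul_bernoulliRemainder_even_pos (hx : x ∈ Icc 0 1)
    (h₁ : (-1) ^ (k + 1) * bernoulliFun (2 * k + 1) x ≤ 0)
    (h₂ : 0 ≤ (-1) ^ (k + 1) * bernoulliFun (2 * k + 2) x) (ht : 0 < t) :
    0 < (-1) ^ (k + 1) * bernoulliRemainder (2 * k + 2) x t := by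
  obtain ⟨b, hb, hb0⟩ := exists_bernoulliFun_even_eq_zero k
  obtain ⟨hbx, hxb⟩ := (neg_one_pow_mul_bernoulliFun_even_nonneg_iff hb hb0 hx).1 h₂
  have hhalf : 2⁻¹ ≤ x := by
    by_contra! hlt
    exact h₁.not_gt (neg_one_pow_mul_bernoulliFun_odd_pos k ⟨hb.1.trans_le hbx, hlt⟩)
  exact mul_bernoulliRemainder_succ_pos_left ht.le hxb
    (fun y hy ↦ neg_one_pow_mul_bernoulliFun_odd_nonpos k
      ⟨hhalf.trans hy.1, hy.2.trans (sub_le_self 1 hb.1.le)⟩)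
    (neg_one_pow_mul_bernoulliRemainder_even_root k hb hb0 ht).2

theorem neg_one_pow_mul_bernoulliRemainder_even_neg (hx : x ∈ Ico 0 1)
    (h₁ : 0 ≤ (-1) ^ (k + 1) * bernoulliFun (2 * k + 1) x)
    (h₂ : (-1) ^ (k + 1) * bernoulliFun (2 * k + 2) x ≤ 0) (ht : 0 < t) :
    (-1) ^ (k + 1) * bernoulliRemainder (2 * k + 2) x t < 0 := by
  obtain ⟨b, hb, hb0⟩ := exists_bernoulliFun_even_eq_zero k
  have hhalf : x ≤ 2⁻¹ := by
    by_contra! hlt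
    exact h₁.not_gt (neg_one_pow_mul_bernoulliFun_odd_neg k ⟨hlt, hx.2⟩)
  have hxb : x ≤ b := by
    rcases (neg_one_pow_mul_bernoulliFun_even_nonpos_iff hb hb0 (Ico_subset_Icc_self hx)).1 h₂
      with h | h
    · exact h
    · linarith [hb.2]
  exact mul_bernoulliRemainder_succ_neg_left ht.le hxb
    (fun y hy ↦ neg_one_pow_mul_bernoulliFun_odd_nonneg k ⟨hx.1.trans hy.1, hy.2.trans hb.2.le⟩)
    (neg_one_pow_mul_bernoulliRemainder_even_root k hb hb0 ht).1

theorem neg_one_pow_mul_bernoulliRemainder_odd_pos (hx : x ∈ Icc 0 1)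
    (h₁ : (-1) ^ (k + 1) * bernoulliFun (2 * k + 2) x ≤ 0)
    (h₂ : 0 ≤ (-1) ^ (k + 1) * bernoulliFun (2 * k + 3) x) (ht : 0 < t) :
    0 < (-1) ^ (k + 1) * bernoulliRemainder (2 * k + 3) x t := by
  obtain ⟨b, hb, hb0⟩ := exists_bernoulliFun_even_eq_zero k
  have hone := (neg_one_pow_mul_bernoulliRemainder_odd_root k ht).2
  rcases hx.1.eq_or_lt with rfl | hx0
  · rwa [← bernoulliRemainder_one_eq_zero (2 * k + 1) ht]
  have hhalf : 2⁻¹ ≤ x := by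
    by_contra! hlt
    rw [neg_one_pow_mul_bernoulliFun_odd_add_two, neg_nonneg] at h₂
    exact h₂.not_gt (neg_one_pow_mul_bernoulliFun_odd_pos (k + 1) ⟨hx0, hlt⟩)
  have hbx : 1 - b ≤ x := by
    rcases (neg_one_pow_mul_bernoulliFun_even_nonpos_iff hb hb0 hx).1 h₁ with h | h
    · linarith [hb.2]
    · exact h
  exact mul_bernoulliRemainder_succ_pos_left ht.le hx.2
    (fun y hy ↦ (neg_one_pow_mul_bernoulliFun_even_nonpos_iff hb hb0
      ⟨hx.1.trans hy.1, hy.2⟩).2 (.inr (hbx.trans hy.1))) hone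

theorem neg_one_pow_mul_bernoulliRemainder_odd_neg (hx : x ∈ Ico 0 1)
    (h₁ : 0 ≤ (-1) ^ (k + 1) * bernoulliFun (2 * k + 2) x)
    (h₂ : (-1) ^ (k + 1) * bernoulliFun (2 * k + 3) x ≤ 0) (ht : 0 < t) :
    (-1) ^ (k + 1) * bernoulliRemainder (2 * k + 3) x t < 0 := by
  obtain ⟨b, hb, hb0⟩ := exists_bernoulliFun_even_eq_zero k
  obtain ⟨hbx, -⟩ :=
    (neg_one_pow_mul_bernoulliFun_even_nonneg_iff hb hb0 (Ico_subset_Icc_self hx)).1 h₁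
  have hhalf : x ≤ 2⁻¹ := by
    by_contra! hlt
    rw [neg_one_pow_mul_bernoulliFun_odd_add_two, neg_nonpos] at h₂
    exact h₂.not_gt (neg_one_pow_mul_bernoulliFun_odd_neg (k + 1) ⟨hlt, hx.2⟩)
  exact mul_bernoulliRemainder_succ_neg_left ht.le hhalf
    (fun y hy ↦ (neg_one_pow_mul_bernoulliFun_even_nonneg_iff hb hb0
      ⟨by grind, by grind⟩).2 ⟨hbx.trans hy.1, by grind⟩)
    (neg_one_pow_mul_bernoulliRemainder_odd_root k ht).1

end Parity

theorem exists_mul_bernoulliRemainder_pos (n : ℕ) (hx : x ∈ Ico 0 1)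
    (h : bernoulliFun n x * bernoulliFun (n + 1) x ≤ 0) :
    ∃ c : ℝ, ∀ t > 0, 0 < c * bernoulliRemainder (n + 1) x t := by
  have hmul (k : ℕ) : (-1) ^ (k + 1) * bernoulliFun n x *
      ((-1) ^ (k + 1) * bernoulliFun (n + 1) x) ≤ 0 := by
    rw [mul_mul_mul_comm, ← mul_pow]
    simpa using h
  obtain rfl | ⟨k, rfl | rfl⟩ : n = 0 ∨ ∃ k, n = 2 * k + 1 ∨ n = 2 * k + 2 := by
    rcases n.even_or_odd' with ⟨k, rfl | rfl⟩
    · cases k <;> grind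
    · exact .inr ⟨k, .inl rfl⟩
  · rw [bernoulliFun_zero, bernoulliFun_one, one_mul] at h
    exact ⟨-1, fun t ht ↦ by simpa using bernoulliRemainder_one_neg (by linarith) ht⟩
  · rcases mul_nonpos_iff.1 (hmul k) with ⟨h₁, h₂⟩ | ⟨h₁, h₂⟩
    · refine ⟨-(-1) ^ (k + 1), fun t ht ↦ ?_⟩
      simpa only [neg_mul, neg_pos] using
        neg_one_pow_mul_bernoulliRemainder_even_neg k hx h₁ h₂ ht
    · exact ⟨(-1) ^ (k + 1), fun t ht ↦
        neg_one_pow_mul_bernoulliRemainder_even_pos k (Ico_subset_Icc_self hx) h₁ h₂ ht⟩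
  · rcases mul_nonpos_iff.1 (hmul k) with ⟨h₁, h₂⟩ | ⟨h₁, h₂⟩
    · refine ⟨-(-1) ^ (k + 1), fun t ht ↦ ?_⟩
      simpa only [neg_mul, neg_pos] using
        neg_one_pow_mul_bernoulliRemainder_odd_neg k hx h₁ h₂ ht
    · exact ⟨(-1) ^ (k + 1), fun t ht ↦
        neg_one_pow_mul_bernoulliRemainder_odd_pos k (Ico_subset_Icc_self hx) h₁ h₂ ht⟩

end RemainderSign

section MellinContinuation

open Filter Asymptotics MeasureTheory Topology

theorem hasMellin_congr {f g : ℝ → ℂ} {s m : ℂ} (hf : HasMellin f s m) (h : EqOn f g (Ioi 0)) :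
    HasMellin g s m := by
  have hfg : EqOn (fun t : ℝ ↦ (t : ℂ) ^ (s - 1) • f t) (fun t : ℝ ↦ (t : ℂ) ^ (s - 1) • g t)
      (Ioi 0) := fun t ht ↦ congrArg _ (h ht)
  exact ⟨hf.1.congr_fun hfg measurableSet_Ioi,
    (setIntegral_congr_fun measurableSet_Ioi hfg).symm.trans hf.2⟩

theorem hasMellin_sum {ι : Type*} (S : Finset ι) (c : ι → ℂ) {F : ι → ℝ → ℂ} {m : ι → ℂ} {s : ℂ}
    (h : ∀ i ∈ S, HasMellin (F i) s (m i)) :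
    HasMellin (fun t ↦ ∑ i ∈ S, c i * F i t) s (∑ i ∈ S, c i * m i) := by
  have hint : ∀ i ∈ S, Integrable (fun t : ℝ ↦ (t : ℂ) ^ (s - 1) • (c i * F i t))
      (volume.restrict (Ioi 0)) := fun i hi ↦ (hasMellin_const_smul (h i hi).1 (c i)).1
  refine ⟨?_, ?_⟩
  · simp only [MellinConvergent, Finset.smul_sum]
    exact integrable_finsetSum S hint
  · simp only [mellin, Finset.smul_sum]
    rw [integral_finsetSum S hint]
    refine Finset.sum_congr rfl fun i hi ↦ ?_
    rw [← (h i hi).2]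
    exact (hasMellin_const_smul (h i hi).1 (c i)).2

theorem hasMellin_cpow_Ioi (a : ℂ) {s : ℂ} (hs : s.re + a.re < 0) :
    HasMellin (indicator (Ioi 1) (fun t ↦ (t : ℂ) ^ a : ℝ → ℂ)) s (-(1 / (s + a))) := by
  have hre : (s + a - 1).re < -1 := by
    simp only [Complex.sub_re, Complex.add_re, Complex.one_re]
    linarith
  have hcpow : EqOn
      (fun t : ℝ ↦ (t : ℂ) ^ (s - 1) • indicator (Ioi 1) (fun t : ℝ ↦ (t : ℂ) ^ a) t)
      (indicator (Ioi 1) fun t : ℝ ↦ (t : ℂ) ^ (s + a - 1)) (Ioi 0) := by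
    intro t ht
    by_cases ht1 : t ∈ Ioi (1 : ℝ)
    · simp only [indicator_of_mem ht1, smul_eq_mul]
      rw [← Complex.cpow_add _ _ (Complex.ofReal_ne_zero.2 (ne_of_gt ht)), sub_add_eq_add_sub]
    · simp only [indicator_of_notMem ht1, smul_zero]
  have hIoi : Ioi (0 : ℝ) ∩ Ioi 1 = Ioi 1 := inter_eq_right.2 (Ioi_subset_Ioi zero_le_one)
  refine ⟨?_, ?_⟩
  · rw [MellinConvergent, integrableOn_congr_fun hcpow measurableSet_Ioi, IntegrableOn,
      integrable_indicator_iff measurableSet_Ioi, IntegrableOn,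
      Measure.restrict_restrict measurableSet_Ioi, inter_comm, hIoi]
    exact integrableOn_Ioi_cpow_of_lt hre zero_lt_one
  · rw [mellin, setIntegral_congr_fun measurableSet_Ioi hcpow,
      setIntegral_indicator measurableSet_Ioi, hIoi, integral_Ioi_cpow_of_lt hre zero_lt_one]
    simp [neg_div]

theorem hasMellin_indicator_sum_pow {S : Set ℝ} {s : ℂ} {n : ℕ} (c m : ℕ → ℂ)
    (h : ∀ i < n, HasMellin (indicator S fun t : ℝ ↦ (t : ℂ) ^ (i : ℂ)) s (m i)) :
    HasMellin (indicator S fun t : ℝ ↦ ∑ i ∈ Finset.range n, c i * (t : ℂ) ^ i) s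
      (∑ i ∈ Finset.range n, c i * m i) := by
  refine hasMellin_congr
    (hasMellin_sum (Finset.range n) c fun i hi ↦ h i (Finset.mem_range.1 hi)) fun t _ ↦ ?_
  by_cases ht : t ∈ S <;> simp [ht]

/-- The function `f` is locally integrable on `(0, ∞)`, decays exponentially at infinity and has the
expansion `f t = ∑ i < n, c i * t ^ i + O(t ^ n)` at `0`. These are the conditions under which the
Mellin transform of `f` continues meromorphically to `-n < re s`. -/
structure HasMellinExpansion (f : ℝ → ℂ) (c : ℕ → ℂ) (n : ℕ) : Prop where
  locallyIntegrableOn : LocallyIntegrableOn f (Ioi 0)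
  isBigO_atTop : ∃ b > 0, f =O[atTop] fun t ↦ Real.exp (-b * t)
  isBigO_nhdsGT :
    (fun t ↦ f t - ∑ i ∈ Finset.range n, c i * (t : ℂ) ^ i) =O[𝓝[>] 0] fun t ↦ t ^ n

/-- What is left of `f` after removing the expansion `∑ i < n, c i * t ^ i`, on `(0, 1]` only so as
to preserve the decay at infinity. -/
noncomputable def expansionTail (f : ℝ → ℂ) (c : ℕ → ℂ) (n : ℕ) : ℝ → ℂ :=
  f - indicator (Ioc 0 1) fun t : ℝ ↦ ∑ i ∈ Finset.range n, c i * (t : ℂ) ^ i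

/-- The meromorphic continuation to `-n < re s` of the Mellin transform of a function `f` with
`HasMellinExpansion f c n`. The sum is the Mellin transform of the expansion restricted to
`(0, 1]`. -/
noncomputable def mellinContinuation (f : ℝ → ℂ) (c : ℕ → ℂ) (n : ℕ) (s : ℂ) : ℂ :=
  mellin (expansionTail f c n) s + ∑ i ∈ Finset.range n, c i * (1 / (s + i))

namespace HasMellinExpansion

variable {f : ℝ → ℂ} {c : ℕ → ℂ} {n : ℕ} {s : ℂ}

theorem locallyIntegrableOn_expansionTail (h : HasMellinExpansion f c n) :
    LocallyIntegrableOn (expansionTail f c n) (Ioi 0) := by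
  have hpoly : Continuous fun t : ℝ ↦ ∑ i ∈ Finset.range n, c i * (t : ℂ) ^ i := by fun_prop
  refine h.locallyIntegrableOn.sub (LocallyIntegrable.locallyIntegrableOn ?_ _)
  exact hpoly.locallyIntegrable.indicator measurableSet_Ioc

theorem expansionTail_isBigO_atTop (h : HasMellinExpansion f c n) :
    ∃ b > 0, expansionTail f c n =O[atTop] fun t ↦ Real.exp (-b * t) := by
  obtain ⟨b, hb, hf⟩ := h.isBigO_atTop
  refine ⟨b, hb, hf.congr' ?_ EventuallyEq.rfl⟩
  filter_upwards [eventually_gt_atTop 1] with t ht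
  simp [expansionTail, not_le_of_gt ht]

theorem expansionTail_isBigO_nhdsGT (h : HasMellinExpansion f c n) :
    expansionTail f c n =O[𝓝[>] 0] (· ^ (-(-n : ℝ))) := by
  refine h.isBigO_nhdsGT.congr' ?_ ?_
  · filter_upwards [Ioc_mem_nhdsGT zero_lt_one] with t ht
    simp only [expansionTail, Pi.sub_apply, indicator_of_mem ht]
  · simp only [neg_neg, Real.rpow_natCast, EventuallyEq.rfl]

theorem mellinConvergent_expansionTail (h : HasMellinExpansion f c n) (hs : -n < s.re) :
    MellinConvergent (expansionTail f c n) s :=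
  have ⟨_, hb, htop⟩ := h.expansionTail_isBigO_atTop
  mellinConvergent_of_isBigO_rpow_exp hb h.locallyIntegrableOn_expansionTail htop
    h.expansionTail_isBigO_nhdsGT hs

theorem differentiableAt_mellin_expansionTail (h : HasMellinExpansion f c n) (hs : -n < s.re) :
    DifferentiableAt ℂ (mellin (expansionTail f c n)) s :=
  have ⟨_, hb, htop⟩ := h.expansionTail_isBigO_atTop
  mellin_differentiableAt_of_isBigO_rpow_exp hb h.locallyIntegrableOn_expansionTail htop
    h.expansionTail_isBigO_nhdsGT hs

theorem differentiableAt_mellinContinuation (h : HasMellinExpansion f c n) (hs : -n < s.re)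
    (hs' : ∀ i < n, s ≠ -i) : DifferentiableAt ℂ (mellinContinuation f c n) s := by
  refine (h.differentiableAt_mellin_expansionTail hs).fun_add
    (DifferentiableAt.fun_sum fun i hi ↦ ?_)
  have : s + i ≠ 0 := fun h ↦ hs' i (Finset.mem_range.1 hi) (eq_neg_of_add_eq_zero_left h)
  fun_prop (disch := assumption)

theorem mellin_eq_mellinContinuation (h : HasMellinExpansion f c n) (hs : 0 < s.re) :
    mellin f s = mellinContinuation f c n s := by
  have hsum := hasMellin_indicator_sum_pow c _ fun i (_ : i < n) ↦
    hasMellin_cpow_Ioc (i : ℂ) (by rw [Complex.natCast_re]; positivity : 0 < s.re + (i : ℂ).re)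
  have htail := h.mellinConvergent_expansionTail
    ((neg_nonpos.2 n.cast_nonneg).trans_lt hs)
  have hadd := (hasMellin_add htail hsum.1).2
  rw [hsum.2] at hadd
  refine (congrArg (mellin · s) (funext fun t ↦ ?_)).trans hadd
  exact (sub_add_cancel (f t) _).symm

theorem hasMellin_sub_sum_pow (h : HasMellinExpansion f c n) (hs : -n < s.re)
    (hs' : s.re < 1 - n) :
    HasMellin (fun t ↦ f t - ∑ i ∈ Finset.range n, c i * (t : ℂ) ^ i) s
      (mellinContinuation f c n s) := by
  have hre {i : ℕ} (hi : i < n) : s.re + (i : ℂ).re < 0 := by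
    have : (i : ℝ) + 1 ≤ n := mod_cast hi
    rw [Complex.natCast_re]
    linarith
  have hsum := hasMellin_indicator_sum_pow c _ fun i hi ↦ hasMellin_cpow_Ioi (i : ℂ) (hre hi)
  have hsub := hasMellin_sub (h.mellinConvergent_expansionTail hs) hsum.1
  rw [hsum.2] at hsub
  simp only [mul_neg, Finset.sum_neg_distrib, sub_neg_eq_add] at hsub
  refine hasMellin_congr hsub fun t ht ↦ ?_
  by_cases ht1 : t ≤ 1
  · simp [expansionTail, ht1, mem_Ioi.1 ht]
  · simp [expansionTail, ht1, not_le.1 ht1]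

end HasMellinExpansion

end MellinContinuation

section HurwitzMellin

open Filter Asymptotics MeasureTheory Topology
open scoped Nat

theorem eq_of_eqOn_quarterPlane {f g : ℂ → ℂ} {r R σ : ℝ}
    (hf : DifferentiableOn ℂ f (Ioi r ×ℂ Ioi 0)) (hg : DifferentiableOn ℂ g (Ioi r ×ℂ Ioi 0))
    (hfg : EqOn f g (Ioi R ×ℂ Ioi 0)) (hσ : r ≤ σ) (hfσ : ContinuousAt f σ)
    (hgσ : ContinuousAt g σ) : f σ = g σ := by
  have hopen (r : ℝ) : IsOpen (Ioi r ×ℂ Ioi 0) := isOpen_Ioi.reProdIm isOpen_Ioi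
  have hconvex : Convex ℝ (Ioi r ×ℂ Ioi 0) :=
    (convex_halfSpace_re_gt r).inter (convex_halfSpace_im_gt 0)
  have hmem : (↑(max r R + 1) + Complex.I : ℂ) ∈ Ioi (max r R) ×ℂ Ioi 0 := by
    simp [Complex.mem_reProdIm]
  have hEqOn : EqOn f g (Ioi r ×ℂ Ioi 0) := by
    refine (hf.analyticOnNhd (hopen r)).eqOn_of_preconnected_of_eventuallyEq
      (hg.analyticOnNhd (hopen r)) hconvex.isPreconnected
      (z₀ := ↑(max r R + 1) + Complex.I) ?_ ?_
    · exact ⟨(le_max_left r R).trans_lt hmem.1, hmem.2⟩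
    · filter_upwards [(hopen R).mem_nhds ⟨(le_max_right r R).trans_lt hmem.1, hmem.2⟩] with z hz
      exact hfg hz
  have hclosure : (σ : ℂ) ∈ closure (Ioi r ×ℂ Ioi 0) := by
    simpa [Complex.closure_reProdIm, Complex.mem_reProdIm] using hσ
  exact tendsto_nhds_unique_of_frequently_eq hfσ hgσ
    ((mem_closure_iff_frequently.1 hclosure).mono fun z hz ↦ hEqOn hz)

theorem bernoulliRemainder_zero_sub_sum (n : ℕ) (x t : ℝ) :
    (bernoulliRemainder 0 x t : ℂ) -
      ∑ i ∈ Finset.range n, ((bernoulliFun i x / i ! : ℝ) : ℂ) * (t : ℂ) ^ i =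
        bernoulliRemainder n x t := by
  simp only [bernoulliRemainder, Finset.range_zero, Finset.sum_empty, sub_zero]
  push_cast
  simp only [div_mul_eq_mul_div]

theorem bernoulliRemainder_zero_isBigO_atTop {x : ℝ} (hx : x < 1) :
    (bernoulliRemainder 0 x) =O[atTop] fun t ↦ Real.exp (-((1 - x) / 2) * t) := by
  have hlin : (fun t : ℝ ↦ t) =O[atTop] fun t ↦ Real.exp ((1 - x) / 2 * t) := by
    simpa using (isLittleO_pow_exp_pos_mul_atTop 1 (show 0 < (1 - x) / 2 by linarith)).isBigO
  have hquot : (fun t ↦ Real.exp (x * t) / (Real.exp t - 1)) =O[atTop]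
      fun t ↦ Real.exp (-(1 - x) * t) := by
    refine IsBigO.of_bound 2 ?_
    filter_upwards [eventually_ge_atTop 1] with t ht
    have hexp : 2 ≤ Real.exp t := by linarith [Real.add_one_le_exp t]
    rw [Real.norm_of_nonneg (div_nonneg (Real.exp_nonneg _) (by linarith)),
      Real.norm_of_nonneg (Real.exp_nonneg _), div_le_iff₀ (by linarith)]
    calc Real.exp (x * t) = Real.exp (-(1 - x) * t) * Real.exp t := by
          rw [← Real.exp_add]
          ring_nf
      _ ≤ 2 * Real.exp (-(1 - x) * t) * (Real.exp t - 1) := by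
          nlinarith [Real.exp_pos (-(1 - x) * t)]
  refine (hlin.mul hquot).congr (fun t ↦ ?_) fun t ↦ ?_
  · rw [bernoulliRemainder_zero, mul_div_assoc]
  · rw [← Real.exp_add]
    ring_nf

theorem hasMellinExpansion_bernoulliRemainder (n : ℕ) {x : ℝ} (hx : x ∈ Ico (0 : ℝ) 1) :
    HasMellinExpansion (fun t ↦ (bernoulliRemainder 0 x t : ℂ))
      (fun i ↦ ((bernoulliFun i x / i ! : ℝ) : ℂ)) n where
  locallyIntegrableOn := by
    refine ContinuousOn.locallyIntegrableOn ?_ measurableSet_Ioi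
    simp only [bernoulliRemainder_zero]
    refine Complex.continuous_ofReal.comp_continuousOn
      (ContinuousOn.div (by fun_prop) (by fun_prop) fun t ht ↦ ?_)
    exact (sub_pos.2 (Real.one_lt_exp_iff.2 ht)).ne'
  isBigO_atTop := ⟨(1 - x) / 2, by linarith [hx.2],
    Complex.isBigO_ofReal_left.2 (bernoulliRemainder_zero_isBigO_atTop hx.2)⟩
  isBigO_nhdsGT := by
    simp only [bernoulliRemainder_zero_sub_sum]
    refine IsBigO.of_bound 2 ?_
    filter_upwards [Ioc_mem_nhdsGT zero_lt_one] with t ht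
    rw [Complex.norm_real, Real.norm_eq_abs, Real.norm_of_nonneg (pow_nonneg ht.1.le n)]
    refine (abs_bernoulliRemainder_le n (Ico_subset_Icc_self hx) ht.1).trans ?_
    gcongr
    · exact pow_nonneg ht.1.le n
    · linarith [ht.2]

theorem one_sub_mem_Ico {a : ℝ} (ha : a ∈ Ioc (0 : ℝ) 1) : 1 - a ∈ Ico (0 : ℝ) 1 :=
  ⟨sub_nonneg.2 ha.2, sub_lt_self 1 ha.1⟩

theorem hasSum_bernoulliRemainder_zero (a : ℝ) {t : ℝ} (ht : 0 < t) :
    HasSum (fun k : ℕ ↦ t * Real.exp (-(k + a) * t)) (bernoulliRemainder 0 (1 - a) t) := by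
  have hsum : bernoulliRemainder 0 (1 - a) t =
      t * Real.exp (-a * t) * (1 - Real.exp (-t))⁻¹ := by
    have := (sub_pos.2 (Real.one_lt_exp_iff.2 ht)).ne'
    rw [bernoulliRemainder_zero, show (1 - a) * t = t + -a * t by ring, Real.exp_add, Real.exp_neg]
    field_simp
  rw [hsum]
  refine ((hasSum_geometric_of_lt_one (Real.exp_nonneg (-t))
    (Real.exp_lt_one_iff.2 (neg_neg_of_pos ht))).mul_left _).congr_fun fun k ↦ ?_
  rw [← Real.exp_nat_mul, mul_assoc, ← Real.exp_add]
  ring_nf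

theorem mellin_bernoulliRemainder_zero {a : ℝ} (ha : a ∈ Ioc (0 : ℝ) 1) {s : ℂ} (hs : 0 < s.re) :
    mellin (fun t ↦ (bernoulliRemainder 0 (1 - a) t : ℂ)) s =
      Complex.Gamma (s + 1) * hurwitzZeta (a : UnitAddCircle) (s + 1) := by
  have hs' : 1 < (s + 1).re := by simpa using hs
  have hpos (k : ℕ) : 0 < k + a := add_pos_of_nonneg_of_pos k.cast_nonneg ha.1
  have hzeta := hasSum_hurwitzZeta_of_one_lt_re (Ioc_subset_Icc_self ha) hs'
  have hF : ∀ t ∈ Ioi (0 : ℝ), HasSum (fun k : ℕ ↦ (1 : ℂ) * Real.exp (-(k + a) * t))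
      ((bernoulliRemainder 0 (1 - a) t : ℂ) / t) := by
    intro t ht
    have := Complex.ofReal_ne_zero.2 (ne_of_gt (mem_Ioi.1 ht))
    refine ((Complex.hasSum_ofReal.2 (hasSum_bernoulliRemainder_zero a ht)).div_const
      (t : ℂ)).congr_fun fun k ↦ ?_
    rw [Complex.ofReal_mul, mul_div_cancel_left₀ _ this, one_mul]
  have hsummable : Summable fun k : ℕ ↦ ‖(1 : ℂ)‖ / (k + a) ^ (s + 1).re := by
    refine hzeta.summable.norm.congr fun k ↦ ?_
    rw [norm_div, ← Complex.norm_cpow_eq_rpow_re_of_pos (hpos k)]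
    push_cast
    rfl
  have hmellin := hasSum_mellin (fun k ↦ Or.inr (hpos k)) (zero_lt_one.trans hs') hF hsummable
  rw [← mellin_cpow_smul] at hmellin
  refine Eq.trans ?_ (hmellin.unique ((hzeta.mul_left _).congr_fun fun k ↦ ?_))
  · refine setIntegral_congr_fun measurableSet_Ioi fun t ht ↦ ?_
    have := Complex.ofReal_ne_zero.2 (ne_of_gt (mem_Ioi.1 ht))
    simp only [Complex.cpow_one, smul_eq_mul]
    field_simp
  · push_cast
    ring

theorem Gamma_mul_hurwitzZeta_eq_mellinContinuation (n : ℕ) {a : ℝ} (ha : a ∈ Ioc (0 : ℝ) 1)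
    {σ : ℝ} (hσ : -n < σ) (hσ' : ∀ k : ℕ, σ ≠ -k) :
    Complex.Gamma (σ + 1) * hurwitzZeta (a : UnitAddCircle) (σ + 1) =
      mellinContinuation (fun t ↦ (bernoulliRemainder 0 (1 - a) t : ℂ))
        (fun i ↦ ((bernoulliFun i (1 - a) / i ! : ℝ) : ℂ)) n σ := by
  have hexp := hasMellinExpansion_bernoulliRemainder n (one_sub_mem_Ico ha)
  have hΓζ {s : ℂ} (hs : ∀ k : ℕ, s ≠ -k) : DifferentiableAt ℂ
      (fun s ↦ Complex.Gamma (s + 1) * hurwitzZeta (a : UnitAddCircle) (s + 1)) s := by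
    have hΓ : DifferentiableAt ℂ Complex.Gamma (s + 1) := by
      refine Complex.differentiableAt_Gamma _ fun k hk ↦ hs (k + 1) ?_
      push_cast
      linear_combination hk
    have hζ : DifferentiableAt ℂ (hurwitzZeta (a : UnitAddCircle)) (s + 1) :=
      differentiableAt_hurwitzZeta _ (by simpa using hs 0)
    exact (differentiableAt_comp_add_const.2 hΓ).mul (differentiableAt_comp_add_const.2 hζ)
  have hquarter {s : ℂ} (hs : s ∈ Ioi (-n : ℝ) ×ℂ Ioi 0) (k : ℕ) : s ≠ -k := by
    rintro rfl
    simpa using hs.2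
  have hreal (k : ℕ) : (σ : ℂ) ≠ -k := mod_cast hσ' k
  refine eq_of_eqOn_quarterPlane (r := -n) (R := 0)
    (fun s hs ↦ (hΓζ (hquarter hs)).differentiableWithinAt)
    (fun s hs ↦ (hexp.differentiableAt_mellinContinuation hs.1
      fun k _ ↦ hquarter hs k).differentiableWithinAt)
    (fun s hs ↦ ?_) hσ.le (hΓζ hreal).continuousAt
    (hexp.differentiableAt_mellinContinuation hσ fun k _ ↦ hreal k).continuousAt
  rw [← hexp.mellin_eq_mellinContinuation hs.1, mellin_bernoulliRemainder_zero ha hs.1]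

end HurwitzMellin

section RealHurwitzZeta

open Filter MeasureTheory Topology
open scoped Nat

theorem cpow_mul_ofReal_eqOn_Ioi (g : ℝ → ℝ) (σ : ℝ) :
    EqOn (fun t : ℝ ↦ (t : ℂ) ^ ((σ : ℂ) - 1) • (g t : ℂ))
      (fun t : ℝ ↦ ((t ^ (σ - 1) * g t : ℝ) : ℂ)) (Ioi 0) := by
  intro t ht
  simp only [smul_eq_mul]
  rw [Complex.ofReal_mul, Complex.ofReal_cpow (mem_Ioi.1 ht).le]
  push_cast
  rfl

theorem mellinConvergent_ofReal_iff {g : ℝ → ℝ} {σ : ℝ} :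
    MellinConvergent (fun t ↦ (g t : ℂ)) σ ↔ IntegrableOn (fun t ↦ t ^ (σ - 1) * g t) (Ioi 0) := by
  rw [MellinConvergent, integrableOn_congr_fun (cpow_mul_ofReal_eqOn_Ioi g σ) measurableSet_Ioi]
  exact ⟨fun h ↦ h.re, fun h ↦ h.ofReal⟩

theorem mellin_ofReal (g : ℝ → ℝ) (σ : ℝ) :
    mellin (fun t ↦ (g t : ℂ)) σ = ((∫ t in Ioi 0, t ^ (σ - 1) * g t : ℝ) : ℂ) := by
  rw [mellin, setIntegral_congr_fun measurableSet_Ioi (cpow_mul_ofReal_eqOn_Ioi g σ)]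
  exact integral_ofReal

theorem ne_neg_natCast_of_mem_Ioo {M : ℕ} {σ : ℝ} (hσ : σ ∈ Ioo (-M : ℝ) (1 - M)) (k : ℕ) :
    σ ≠ -k := by
  rintro rfl
  have hkM : k < M := by exact_mod_cast neg_lt_neg_iff.1 hσ.1
  have hMk : M < k + 1 := by
    have : (M : ℝ) < k + 1 := by linarith [hσ.2]
    exact_mod_cast this
  lia

variable {a σ : ℝ} {M : ℕ}

theorem hasMellin_bernoulliRemainder (ha : a ∈ Ioc (0 : ℝ) 1) (hσ : σ ∈ Ioo (-M : ℝ) (1 - M)) :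
    HasMellin (fun t ↦ (bernoulliRemainder (M + 1) (1 - a) t : ℂ)) (σ - 1 : ℝ)
      (Complex.Gamma σ * hurwitzZeta (a : UnitAddCircle) σ) := by
  have hexp := hasMellinExpansion_bernoulliRemainder (M + 1) (one_sub_mem_Ico ha)
  have hlower : -((M + 1 : ℕ) : ℝ) < σ - 1 := by
    push_cast
    linarith [hσ.1]
  have hupper : σ - 1 < 1 - ((M + 1 : ℕ) : ℝ) := by
    push_cast
    linarith [hσ.2]
  have hpole (k : ℕ) : σ - 1 ≠ -k :=
    ne_neg_natCast_of_mem_Ioo (M := M + 1) ⟨hlower, hupper⟩ k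
  have hcont := Gamma_mul_hurwitzZeta_eq_mellinContinuation (M + 1) ha hlower hpole
  have hmellin := hexp.hasMellin_sub_sum_pow (s := (σ - 1 : ℝ)) hlower hupper
  simp only [bernoulliRemainder_zero_sub_sum] at hmellin
  rwa [← hcont, Complex.ofReal_sub, Complex.ofReal_one, sub_add_cancel, ← Complex.ofReal_one,
    ← Complex.ofReal_sub] at hmellin

theorem integrableOn_rpow_mul_bernoulliRemainder (ha : a ∈ Ioc (0 : ℝ) 1)
    (hσ : σ ∈ Ioo (-M : ℝ) (1 - M)) :
    IntegrableOn (fun t ↦ t ^ (σ - 1 - 1) * bernoulliRemainder (M + 1) (1 - a) t) (Ioi 0) :=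
  mellinConvergent_ofReal_iff.1 (hasMellin_bernoulliRemainder ha hσ).1

theorem hurwitzZeta_eq_ofReal_integral (ha : a ∈ Ioc (0 : ℝ) 1) (hσ : σ ∈ Ioo (-M : ℝ) (1 - M)) :
    hurwitzZeta (a : UnitAddCircle) σ = (((Real.Gamma σ)⁻¹ *
      ∫ t in Ioi 0, t ^ (σ - 1 - 1) * bernoulliRemainder (M + 1) (1 - a) t : ℝ) : ℂ) := by
  have hΓ : (Real.Gamma σ : ℂ) ≠ 0 :=
    Complex.ofReal_ne_zero.2 (Real.Gamma_ne_zero (ne_neg_natCast_of_mem_Ioo hσ))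
  have hmellin := (hasMellin_bernoulliRemainder ha hσ).2
  rw [mellin_ofReal, Complex.Gamma_ofReal] at hmellin
  rw [Complex.ofReal_mul, hmellin, Complex.ofReal_inv, inv_mul_cancel_left₀ hΓ]

theorem hurwitzZeta_ne_zero_of_bernoulliFun_mul_nonneg (ha : a ∈ Ioc (0 : ℝ) 1)
    (hσ : σ ∈ Ioo (-M : ℝ) (1 - M)) (h : 0 ≤ bernoulliFun M a * bernoulliFun (M + 1) a) :
    hurwitzZeta (a : UnitAddCircle) σ ≠ 0 := by
  have hreflect : bernoulliFun M (1 - a) * bernoulliFun (M + 1) (1 - a) ≤ 0 := by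
    rw [bernoulliFun_eval_one_sub, bernoulliFun_eval_one_sub, pow_succ]
    calc _ = -((-1) ^ M * (-1) ^ M * (bernoulliFun M a * bernoulliFun (M + 1) a)) := by ring
      _ ≤ 0 := neg_nonpos.2 (mul_nonneg (mul_self_nonneg _) h)
  obtain ⟨c, hc⟩ := exists_mul_bernoulliRemainder_pos M (one_sub_mem_Ico ha) hreflect
  have hpos : ∀ t ∈ Ioi (0 : ℝ),
      0 < c * (t ^ (σ - 1 - 1) * bernoulliRemainder (M + 1) (1 - a) t) := by
    intro t ht
    rw [mul_left_comm]
    exact mul_pos (Real.rpow_pos_of_pos ht _) (hc t ht)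
  have hsupport : Function.support (fun t ↦
      c * (t ^ (σ - 1 - 1) * bernoulliRemainder (M + 1) (1 - a) t)) ∩ Ioi 0 = Ioi 0 :=
    inter_eq_right.2 fun t ht ↦ (hpos t ht).ne'
  have hint : 0 < ∫ t in Ioi 0, c * (t ^ (σ - 1 - 1) * bernoulliRemainder (M + 1) (1 - a) t) := by
    rw [setIntegral_pos_iff_support_of_nonneg_ae
      (ae_restrict_of_forall_mem measurableSet_Ioi fun t ht ↦ (hpos t ht).le)
      ((integrableOn_rpow_mul_bernoulliRemainder ha hσ).const_mul c),
      hsupport, Real.volume_Ioi]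
    exact ENNReal.zero_lt_top
  rw [integral_const_mul] at hint
  rw [hurwitzZeta_eq_ofReal_integral ha hσ]
  exact Complex.ofReal_ne_zero.2 (mul_ne_zero
    (inv_ne_zero (Real.Gamma_ne_zero (ne_neg_natCast_of_mem_Ioo hσ)))
    (right_ne_zero_of_mul hint.ne'))

theorem tendsto_ofReal_nhdsNE (x : ℝ) : Tendsto (fun y : ℝ ↦ (y : ℂ)) (𝓝[≠] x) (𝓝[≠] ↑x) :=
  (Complex.continuous_ofReal.tendsto x).inf
    (tendsto_principal_principal.2 fun _ hy ↦ Complex.ofReal_injective.ne hy)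

theorem mul_Gamma_mul_hurwitzZeta_eq (ha : a ∈ Ioc (0 : ℝ) 1) {w : ℝ} (hw : w ∈ Ioo (-1 : ℝ) 1)
    (hw0 : w ≠ 0) :
    (w : ℂ) * Complex.Gamma w * hurwitzZeta (a : UnitAddCircle) w =
      w * (mellin (expansionTail (fun t ↦ (bernoulliRemainder 0 (1 - a) t : ℂ))
        (fun i ↦ ((bernoulliFun i (1 - a) / i ! : ℝ) : ℂ)) 2) (w - 1) + 1 / (w - 1)) +
      ((1 / 2 - a : ℝ) : ℂ) := by
  have hpole (k : ℕ) : w - 1 ≠ -k := by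
    rcases k with _ | _ | k
    · simpa [sub_eq_zero] using hw.2.ne
    · simpa using hw0
    · push_cast
      linarith [hw.1, k.cast_nonneg (α := ℝ)]
  have hcont := Gamma_mul_hurwitzZeta_eq_mellinContinuation 2 ha
    (by push_cast; linarith [hw.1]) hpole
  have hw0' : (w : ℂ) ≠ 0 := Complex.ofReal_ne_zero.2 hw0
  rw [Complex.ofReal_sub, Complex.ofReal_one, sub_add_cancel] at hcont
  rw [mul_assoc, hcont, mellinContinuation, Finset.sum_range_succ, Finset.sum_range_one]
  simp only [bernoulliFun_zero, bernoulliFun_one, Nat.factorial, Nat.cast_zero, Nat.cast_one,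
    mul_one, div_one, add_zero, sub_add_cancel, Complex.ofReal_one, one_mul]
  push_cast
  field_simp
  ring

/- `hurwitzZeta_neg_nat` excludes the argument `0`. The value there comes from the continuation of
`Γ(w) * ζ(w, a)` as `w → 0`. -/
theorem hurwitzZeta_apply_zero (ha : a ∈ Ioc (0 : ℝ) 1) :
    hurwitzZeta (a : UnitAddCircle) 0 = ((1 / 2 - a : ℝ) : ℂ) := by
  set T : ℂ → ℂ := mellin (expansionTail (fun t ↦ (bernoulliRemainder 0 (1 - a) t : ℂ))
    (fun i ↦ ((bernoulliFun i (1 - a) / i ! : ℝ) : ℂ)) 2)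
  have hleft : Tendsto (fun w : ℂ ↦ w * Complex.Gamma w * hurwitzZeta (a : UnitAddCircle) w)
      (𝓝[≠] 0) (𝓝 (hurwitzZeta (a : UnitAddCircle) 0)) := by
    simpa using Complex.tendsto_self_mul_Gamma_nhds_zero.mul
      ((differentiableAt_hurwitzZeta (a : UnitAddCircle) zero_ne_one).continuousAt.tendsto.mono_left
        nhdsWithin_le_nhds)
  have hright : Tendsto (fun w : ℂ ↦ w * (T (w - 1) + 1 / (w - 1)) + ((1 / 2 - a : ℝ) : ℂ))
      (𝓝[≠] 0) (𝓝 ((1 / 2 - a : ℝ) : ℂ)) := by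
    have hexp := hasMellinExpansion_bernoulliRemainder 2 (one_sub_mem_Ico ha)
    have htail : DifferentiableAt ℂ T (0 - 1) :=
      hexp.differentiableAt_mellin_expansionTail (by norm_num)
    have hcont : ContinuousAt
        (fun w : ℂ ↦ w * (T (w - 1) + 1 / (w - 1)) + ((1 / 2 - a : ℝ) : ℂ)) 0 := by
      have hinv : ContinuousAt (fun w : ℂ ↦ 1 / (w - 1)) 0 := by fun_prop (disch := norm_num)
      exact (continuousAt_id.mul
        ((differentiableAt_comp_sub_const.2 htail).continuousAt.add hinv)).add continuousAt_const
    simpa using hcont.tendsto.mono_left nhdsWithin_le_nhds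
  refine tendsto_nhds_unique_of_eventuallyEq (hleft.comp (tendsto_ofReal_nhdsNE 0))
    (hright.comp (tendsto_ofReal_nhdsNE 0)) ?_
  filter_upwards [self_mem_nhdsWithin,
    nhdsWithin_le_nhds (Ioo_mem_nhds neg_one_lt_zero zero_lt_one)] with w hw0 hw
  exact mul_Gamma_mul_hurwitzZeta_eq ha hw hw0

theorem hurwitzZeta_neg_natCast (ha : a ∈ Ioc (0 : ℝ) 1) (k : ℕ) :
    hurwitzZeta (a : UnitAddCircle) ((-k : ℝ) : ℂ) =
      ((-bernoulliFun (k + 1) a / (k + 1) : ℝ) : ℂ) := by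
  rcases eq_or_ne k 0 with rfl | hk
  · simp [hurwitzZeta_apply_zero ha, bernoulliFun_one]
  · have heval : ((Polynomial.bernoulli (k + 1)).map (algebraMap ℚ ℂ)).eval (a : ℂ) =
        (bernoulliFun (k + 1) a : ℂ) := by
      rw [bernoulliFun, ← Complex.coe_algebraMap, ← Polynomial.eval_map_apply, Polynomial.map_map]
      rfl
    push_cast
    rw [hurwitzZeta_neg_nat hk (Ioc_subset_Icc_self ha), heval]
    ring

theorem continuousAt_re_hurwitzZeta (a : UnitAddCircle) {σ : ℝ} (hσ : σ ≠ 1) :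
    ContinuousAt (fun σ : ℝ ↦ (hurwitzZeta a σ).re) σ :=
  Complex.continuous_re.continuousAt.comp
    (ContinuousAt.comp (f := fun σ : ℝ ↦ (σ : ℂ))
      (differentiableAt_hurwitzZeta a (by exact_mod_cast hσ)).continuousAt
      Complex.continuous_ofReal.continuousAt)

theorem eventually_re_hurwitzZeta_neg (a : UnitAddCircle) :
    ∀ᶠ σ : ℝ in 𝓝[<] 1, (hurwitzZeta a σ).re < 0 := by
  have hres : Tendsto (fun σ : ℝ ↦ (((σ : ℂ) - 1) * hurwitzZeta a σ).re) (𝓝[<] 1) (𝓝 1) :=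
    (Complex.continuous_re.tendsto _).comp ((hurwitzZeta_residue_one a).comp
      ((tendsto_ofReal_nhdsNE 1).mono_left (nhdsWithin_mono 1 fun _ h ↦ (mem_Iio.1 h).ne)))
  filter_upwards [hres.eventually_const_lt zero_lt_one, self_mem_nhdsWithin] with σ hpos hσ
  rw [← Complex.ofReal_one, ← Complex.ofReal_sub, Complex.re_ofReal_mul] at hpos
  exact neg_of_mul_pos_right hpos (sub_nonpos.2 (mem_Iio.1 hσ).le)

theorem exists_hurwitzZeta_eq_zero_of_re_mul_re_neg (ha : a ∈ Ioc (0 : ℝ) 1) {y : ℝ}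
    (hy : y ∈ Ioc (-M : ℝ) (1 - M)) (hy1 : y ≠ 1)
    (h : (hurwitzZeta (a : UnitAddCircle) ((-M : ℝ) : ℂ)).re *
      (hurwitzZeta (a : UnitAddCircle) y).re < 0) :
    ∃ σ ∈ Ioo (-M : ℝ) (1 - M), hurwitzZeta (a : UnitAddCircle) σ = 0 := by
  have hcont : ContinuousOn (fun σ : ℝ ↦ (hurwitzZeta (a : UnitAddCircle) σ).re) (Icc (-M) y) := by
    intro σ hσ
    have hσ1 : σ < 1 := hσ.2.trans_lt
      (lt_of_le_of_ne (hy.2.trans (sub_le_self _ M.cast_nonneg)) hy1)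
    exact (continuousAt_re_hurwitzZeta _ hσ1.ne).continuousWithinAt
  obtain ⟨σ, hσ, hre⟩ : ∃ σ ∈ Ioo (-M : ℝ) y, (hurwitzZeta (a : UnitAddCircle) σ).re = 0 := by
    rcases mul_neg_iff.1 h with ⟨hM, hy0⟩ | ⟨hM, hy0⟩
    · exact intermediate_value_Ioo' hy.1.le hcont ⟨hy0, hM⟩
    · exact intermediate_value_Ioo hy.1.le hcont ⟨hM, hy0⟩
  have hσM : σ ∈ Ioo (-M : ℝ) (1 - M) := ⟨hσ.1, hσ.2.trans_le hy.2⟩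
  refine ⟨σ, hσM, ?_⟩
  rw [hurwitzZeta_eq_ofReal_integral ha hσM, Complex.ofReal_re] at hre
  rw [hurwitzZeta_eq_ofReal_integral ha hσM, hre, Complex.ofReal_zero]

theorem exists_re_hurwitzZeta_mul_re_neg (ha : a ∈ Ioc (0 : ℝ) 1)
    (h : bernoulliFun M a * bernoulliFun (M + 1) a < 0) :
    ∃ y ∈ Ioc (-M : ℝ) (1 - M), y ≠ 1 ∧ (hurwitzZeta (a : UnitAddCircle) ((-M : ℝ) : ℂ)).re *
      (hurwitzZeta (a : UnitAddCircle) y).re < 0 := by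
  rw [hurwitzZeta_neg_natCast ha, Complex.ofReal_re]
  cases M with
  | zero =>
    obtain ⟨y, hneg, hy⟩ := ((eventually_re_hurwitzZeta_neg (a : UnitAddCircle)).and
      (Ioo_mem_nhdsLT zero_lt_one)).exists
    refine ⟨y, by simpa using ⟨hy.1, hy.2.le⟩, hy.2.ne, mul_neg_of_pos_of_neg ?_ hneg⟩
    simpa [bernoulliFun_zero] using h
  | succ m =>
    refine ⟨-m, by constructor <;> push_cast <;> linarith, ?_, ?_⟩
    · linarith [m.cast_nonneg (α := ℝ)]
    · rw [hurwitzZeta_neg_natCast ha, Complex.ofReal_re, div_mul_div_comm, neg_mul_neg, mul_comm]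
      exact div_neg_of_neg_of_pos h (by positivity)

theorem exists_hurwitzZeta_eq_zero_iff (ha : a ∈ Ioc (0 : ℝ) 1) (M : ℕ) :
    (∃ σ ∈ Ioo (-M : ℝ) (1 - M), hurwitzZeta (a : UnitAddCircle) σ = 0) ↔
      bernoulliFun M a * bernoulliFun (M + 1) a < 0 := by
  refine ⟨fun ⟨σ, hσ, hzero⟩ ↦ ?_, fun h ↦ ?_⟩
  · by_contra! h
    exact hurwitzZeta_ne_zero_of_bernoulliFun_mul_nonneg ha hσ h hzero
  · obtain ⟨y, hy, hy1, hneg⟩ := exists_re_hurwitzZeta_mul_re_neg ha h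
    exact exists_hurwitzZeta_eq_zero_of_re_mul_re_neg ha hy hy1 hneg

end RealHurwitzZeta

theorem bernoulliPoly_eq_bernoulliFun (n : ℕ) (x : ℝ) : bernoulliPoly n x = bernoulliFun n x := by
  rw [bernoulliPoly, bernoulliFun, Polynomial.aeval_def, Polynomial.eval_map]

/-- For an integer `N ≥ -1` and `0 < a ≤ 1`, the Hurwitz zeta function `σ ↦ ζ(σ, a)` has a
real zero in the open interval `(-N-1, -N)` iff `B_{N+1}(a) * B_{N+2}(a) < 0`. -/
theorem hurwitzZeta_has_real_zero_iff (N : ℤ) (hN : -1 ≤ N) (a : ℝ) (ha : 0 < a) (ha' : a ≤ 1) :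
    (∃ σ : ℝ, σ ∈ Set.Ioo (-(N : ℝ) - 1) (-(N : ℝ)) ∧
        hurwitzZeta (a : UnitAddCircle) (σ : ℂ) = 0) ↔
      bernoulliPoly (N + 1).toNat a * bernoulliPoly (N + 2).toNat a < 0 := by
  obtain ⟨M, hM⟩ := Int.eq_ofNat_of_zero_le (show 0 ≤ N + 1 by lia)
  obtain rfl : N = M - 1 := by lia
  have hinterval : Ioo (-((M - 1 : ℤ) : ℝ) - 1) (-((M - 1 : ℤ) : ℝ)) = Ioo (-M : ℝ) (1 - M) := by
    push_cast
    ring_nf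
  rw [hinterval, show ((M : ℤ) - 1 + 1).toNat = M by lia,
    show ((M : ℤ) - 1 + 2).toNat = M + 1 by lia, bernoulliPoly_eq_bernoulliFun,
    bernoulliPoly_eq_bernoulliFun]
  exact exists_hurwitzZeta_eq_zero_iff ⟨ha, ha'⟩ M
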